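/- (Reaction term estimate, flat-ambient case.) Let 0 < δ ≤ 1/2, let k̃ ≥ 1 and m ≥ 4k̃ be integers, let c be a real number with 1/m < c ≤ 1/(m−k̃), let d ∈ ℝ, and suppose f = c|H|² + d − |A|² > 0. Then Σ_{α,β=1}^{k−1} (tr(A_α A_β))² + Σ_{α,β=1}^{k−1} ‖A_α A_β − A_β A_α‖² + Σ_{β=1}^{k−1} ‖h̊ A_β − A_β h̊‖² ≤ (1−δ)·(|A⁻|²/f)·(cR₂ − R₁) + (1−δ)·(|A⁻|²/f)·( (1/(mc−1)) d (|A⁻|² + 2f) + (mc/(mc−1)) d |h̊|² ). -/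

import Mathlib

/-!
Write `a = |h̊|²`, `b = |A⁻|²`, `e = mc − 1`, and let `S`, `P`, `Q` be, over indices `≥ 1`, the sums
`S = Σ (tr A_α A_β)² + Σ ‖[A_α, A_β]‖²`, `P = Σ (tr h̊ A_β)²` and `Q = Σ ‖[h̊, A_β]‖²`.

Two symmetric matrices satisfy `(tr MN)² + ‖[M, N]‖² ≤ 2 ‖M‖² ‖N‖²` (`trace_sq_add_comm_le`):
after diagonalising `M` this is Cauchy–Schwarz on the diagonal entries of `N` and
`(dᵢ − dⱼ)² ≤ 2 Σ d²` on the others. Summing, `S ≤ 2b²` and `P + Q ≤ 2ab`.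
Since the `A_β` with `β ≥ 1` are traceless, `R₁ = (a + H²/m)² + 2P + 2Q + S`, and eliminating `H²`
through the definition of `f` turns `cR₂ − R₁` plus the `d`-terms into
`((f + b)² + d² − db + a(f + b))/e + a(f + b) − 2P − 2Q − S`.
The hypotheses on `c` and `m` give `0 < e ≤ 1/3`, and `d² − db ≥ −b²/4`, so this is at least
`3f² + 6fb + b²/4 + 4af ≥ 0`. As `1 − δ ≥ 1/2`, the claim follows from
`2f(S + Q) ≤ 2f(2b² + 2ab) ≤ b(3f² + 6fb + b²/4 + 4af)` (`reaction_scalar_ineq`).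
The bound `S ≤ 2b²` is enough here: the sharper constant `3/2` of Li and Li is not needed.
-/

open Finset

/-- Squared Frobenius norm of a real matrix. -/
def frobSq {m : ℕ} (M : Matrix (Fin m) (Fin m) ℝ) : ℝ := ∑ i, ∑ j, (M i j) ^ 2

/-- The reaction term `R₁ = Σ_{α,β} (tr(A_α A_β))² + Σ_{α,β} ‖A_α A_β − A_β A_α‖²`. -/
def reactionR1 {m k : ℕ} (A : Fin k → Matrix (Fin m) (Fin m) ℝ) : ℝ :=
  (∑ α, ∑ β, (Matrix.trace (A α * A β)) ^ 2)
    + ∑ α, ∑ β, frobSq (A α * A β - A β * A α)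

/-- The traceless part `h̊ = A_0 − (|H|/m)·Id` of the second fundamental form in the
principal direction. -/
noncomputable def tracelessh {m k : ℕ} (hk : 0 < k)
    (A : Fin k → Matrix (Fin m) (Fin m) ℝ) (H : ℝ) : Matrix (Fin m) (Fin m) ℝ :=
  A ⟨0, hk⟩ - (H / (m : ℝ)) • (1 : Matrix (Fin m) (Fin m) ℝ)

/-- `|A⁻|² = Σ_{α ≥ 1} ‖A_α‖²`. -/
def AminusSq {m k : ℕ} (hk : 0 < k) (A : Fin k → Matrix (Fin m) (Fin m) ℝ) : ℝ :=
  ∑ α ∈ Finset.univ.erase ⟨0, hk⟩, frobSq (A α)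

open Matrix in
lemma frobSq_eq_trace {m : ℕ} (M : Matrix (Fin m) (Fin m) ℝ) :
    frobSq M = Matrix.trace (M * Mᵀ) := by
  simp [frobSq, Matrix.trace, Matrix.mul_apply, sq]

lemma frobSq_nonneg {m : ℕ} (M : Matrix (Fin m) (Fin m) ℝ) : 0 ≤ frobSq M := by
  unfold frobSq; positivity

open Matrix in
/-- The Frobenius norm is invariant under orthogonal conjugation. -/
lemma frobSq_conj {m : ℕ} (U M : Matrix (Fin m) (Fin m) ℝ) (hU : Uᵀ * U = 1) :
    frobSq (U * M * Uᵀ) = frobSq M := by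
  rw [frobSq_eq_trace, frobSq_eq_trace]
  have : U * M * Uᵀ * (U * M * Uᵀ)ᵀ = U * (M * Mᵀ * Uᵀ) := by
    simp only [Matrix.transpose_mul, Matrix.transpose_transpose, Matrix.mul_assoc]
    rw [← Matrix.mul_assoc Uᵀ U, hU, Matrix.one_mul]
  rw [this, Matrix.trace_mul_comm, Matrix.mul_assoc, hU, Matrix.mul_one]

/-- The case of a diagonal first matrix in `trace_sq_add_comm_le`. -/
lemma trace_sq_add_comm_le_diag {m : ℕ} (v : Fin m → ℝ) (N : Matrix (Fin m) (Fin m) ℝ) :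
    (Matrix.trace (Matrix.diagonal v * N)) ^ 2
      + frobSq (Matrix.diagonal v * N - N * Matrix.diagonal v)
      ≤ 2 * frobSq (Matrix.diagonal v) * frobSq N := by
  have hd : frobSq (Matrix.diagonal v) = ∑ i, v i ^ 2 := by
    simp [frobSq, Matrix.diagonal_apply, ite_pow]
  have ht : Matrix.trace (Matrix.diagonal v * N) = ∑ i, v i * N i i := by
    simp [Matrix.trace, Matrix.diagonal_mul]
  have hcs : (∑ i, v i * N i i) ^ 2 ≤ (∑ i, v i ^ 2) * ∑ i, N i i ^ 2 :=
    Finset.sum_mul_sq_le_sq_mul_sq _ _ _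
  rw [hd, ht]
  set s := ∑ i, v i ^ 2 with hs
  have hs0 : 0 ≤ s := by positivity
  have hdiag : s * ∑ i, N i i ^ 2 = ∑ i, ∑ j, if i = j then s * N i j ^ 2 else 0 := by
    simp [Finset.mul_sum]
  have hsum : (∑ i, ∑ j, if i = j then s * N i j ^ 2 else 0)
      + frobSq (Matrix.diagonal v * N - N * Matrix.diagonal v) ≤ 2 * s * frobSq N := by
    unfold frobSq
    rw [← Finset.sum_add_distrib, Finset.mul_sum]
    refine Finset.sum_le_sum fun i _ => ?_
    rw [← Finset.sum_add_distrib, Finset.mul_sum]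
    refine Finset.sum_le_sum fun j _ => ?_
    simp only [Matrix.sub_apply, Matrix.diagonal_mul, Matrix.mul_diagonal]
    split_ifs with hij
    · subst hij
      nlinarith [mul_nonneg hs0 (sq_nonneg (N i i))]
    · have h2 : v i ^ 2 + v j ^ 2 ≤ s := by
        rw [← Finset.sum_pair (f := fun i => v i ^ 2) hij]
        exact Finset.sum_le_sum_of_subset_of_nonneg (Finset.subset_univ _)
          fun _ _ _ => sq_nonneg _
      have h3 : (v i - v j) ^ 2 ≤ 2 * s := by nlinarith [sq_nonneg (v i + v j)]
      nlinarith [mul_le_mul_of_nonneg_right h3 (sq_nonneg (N i j))]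
  linarith

open Matrix in
/-- The algebraic core: the trace and commutator of a pair of matrices, the first symmetric, are
jointly controlled by their Frobenius norms. -/
lemma trace_sq_add_comm_le {m : ℕ} (M N : Matrix (Fin m) (Fin m) ℝ) (hM : M.IsSymm) :
    (Matrix.trace (M * N)) ^ 2 + frobSq (M * N - N * M) ≤ 2 * frobSq M * frobSq N := by
  have hH : M.IsHermitian := by
    rw [Matrix.IsHermitian, Matrix.conjTranspose_eq_transpose_of_trivial]; exact hM
  obtain ⟨U, v, hU, hU', hMU⟩ : ∃ (U : Matrix (Fin m) (Fin m) ℝ) (v : Fin m → ℝ),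
      Uᵀ * U = 1 ∧ U * Uᵀ = 1 ∧ M = U * Matrix.diagonal v * Uᵀ := by
    refine ⟨hH.eigenvectorUnitary, hH.eigenvalues, ?_, ?_, ?_⟩
    · have := Matrix.UnitaryGroup.star_mul_self hH.eigenvectorUnitary
      rwa [Matrix.star_eq_conjTranspose, Matrix.conjTranspose_eq_transpose_of_trivial] at this
    · have := Unitary.mul_star_self_of_mem hH.eigenvectorUnitary.2
      rwa [Matrix.star_eq_conjTranspose, Matrix.conjTranspose_eq_transpose_of_trivial] at this
    · have := hH.spectral_theorem
      rw [Unitary.conjStarAlgAut_apply, Matrix.star_eq_conjTranspose,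
        Matrix.conjTranspose_eq_transpose_of_trivial] at this
      exact this
  obtain ⟨N', hN⟩ : ∃ N', N = U * N' * Uᵀ := by
    refine ⟨Uᵀ * N * U, ?_⟩
    simp only [Matrix.mul_assoc, hU', Matrix.mul_one]
    rw [← Matrix.mul_assoc, hU', Matrix.one_mul]
  have hconj : ∀ X Y : Matrix (Fin m) (Fin m) ℝ,
      U * X * Uᵀ * (U * Y * Uᵀ) = U * (X * Y) * Uᵀ := by
    intro X Y
    simp only [Matrix.mul_assoc]
    rw [← Matrix.mul_assoc Uᵀ U, hU, Matrix.one_mul]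
  have htr : ∀ X : Matrix (Fin m) (Fin m) ℝ, Matrix.trace (U * X * Uᵀ) = Matrix.trace X := by
    intro X
    rw [Matrix.mul_assoc, Matrix.trace_mul_comm, Matrix.mul_assoc, hU, Matrix.mul_one]
  rw [hMU, hN, hconj, hconj, htr, ← Matrix.sub_mul, ← Matrix.mul_sub, frobSq_conj _ _ hU,
    frobSq_conj _ _ hU, frobSq_conj _ _ hU]
  exact trace_sq_add_comm_le_diag v N'

/-- The scalar inequality left once the matrix quantities are replaced by
`a = |h̊|²`, `b = |A⁻|²` and the sums `S`, `P`, `Q`. -/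
lemma reaction_scalar_ineq {m c H d f a b S P Q δ : ℝ} (hm : 0 < m)
    (he : 0 < m * c - 1) (he3 : m * c - 1 ≤ 1 / 3)
    (hδ : δ ≤ 1 / 2)
    (hf : f = c * H ^ 2 + d - (a + H ^ 2 / m + b)) (hfpos : 0 < f)
    (ha : 0 ≤ a) (hb : 0 ≤ b)
    (hS : S ≤ 2 * b ^ 2) (hP : 0 ≤ P) (hPQ : P + Q ≤ 2 * a * b) :
    S + Q ≤ (1 - δ) * (b / f)
          * (c * (H ^ 2 * (a + H ^ 2 / m)) - ((a + H ^ 2 / m) ^ 2 + 2 * P + 2 * Q + S))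
        + (1 - δ) * (b / f)
          * ((1 / (m * c - 1)) * d * (b + 2 * f) + (m * c / (m * c - 1)) * d * a) := by
  rw [← mul_add]
  set e := m * c - 1 with hedef
  set T := (f + b) ^ 2 + d ^ 2 - d * b + a * (f + b) with hT
  have key : c * (H ^ 2 * (a + H ^ 2 / m)) - ((a + H ^ 2 / m) ^ 2 + 2 * P + 2 * Q + S)
      + ((1 / e) * d * (b + 2 * f) + (m * c / e) * d * a)
      = T / e + a * (f + b) - 2 * P - 2 * Q - S := by
    have hc : c = (e + 1) / m := by rw [hedef]; field_simp; ring
    rw [hT, hf, hc]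
    field_simp
    ring
  rw [key]
  have hTlow : (f + b) ^ 2 - b ^ 2 / 4 + a * (f + b) ≤ T := by
    rw [hT]; nlinarith [sq_nonneg (d - b / 2)]
  have hfb : 0 ≤ f * b := by positivity
  have haf : 0 ≤ a * f := by positivity
  have hab : 0 ≤ a * b := by positivity
  have hT0 : 0 ≤ T := by nlinarith [sq_nonneg f, sq_nonneg b]
  have hTe : 3 * T ≤ T / e := by
    rw [le_div_iff₀ he]; nlinarith
  have hB : 3 * f ^ 2 + 6 * (f * b) + b ^ 2 / 4 + 4 * (a * f)
      ≤ T / e + a * (f + b) - 2 * P - 2 * Q - S := by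
    nlinarith
  set B := T / e + a * (f + b) - 2 * P - 2 * Q - S with hBdef
  have hB0 : 0 ≤ B := le_trans (by positivity) hB
  have h1 : 2 * f * (S + Q) ≤ b * B := by
    have hSQ : S + Q ≤ 2 * b ^ 2 + 2 * a * b := by linarith
    have := mul_le_mul_of_nonneg_left hSQ (by positivity : 0 ≤ 2 * f)
    have := mul_le_mul_of_nonneg_left hB hb
    have : 0 ≤ b * (3 * f ^ 2) := by positivity
    have : 0 ≤ b * (f * b) := by positivity
    have : 0 ≤ b * (b ^ 2 / 4) := by positivity
    nlinarith
  have h2 : S + Q ≤ 1 / 2 * (b / f) * B := by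
    have : 1 / 2 * (b / f) * B = (b * B) / (2 * f) := by field_simp
    rw [this, le_div_iff₀ (by positivity)]
    linarith
  have h3 : 1 / 2 * ((b / f) * B) ≤ (1 - δ) * ((b / f) * B) :=
    mul_le_mul_of_nonneg_right (by linarith) (by positivity)
  linarith

/-- Splitting off the index `z` from a symmetric double sum. -/
lemma sum_sum_split {k : ℕ} (z : Fin k) (g : Fin k → Fin k → ℝ) (hg : ∀ α β, g α β = g β α) :
    ∑ α, ∑ β, g α β = g z z + 2 * ∑ β ∈ Finset.univ.erase z, g z β
      + ∑ α ∈ Finset.univ.erase z, ∑ β ∈ Finset.univ.erase z, g α β := by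
  have h : ∀ u : Fin k → ℝ, ∑ α, u α = u z + ∑ α ∈ Finset.univ.erase z, u α :=
    fun u => (Finset.add_sum_erase _ u (Finset.mem_univ z)).symm
  rw [h]
  simp only [h (g _), Finset.sum_add_distrib]
  rw [Finset.sum_congr rfl fun α _ => hg α z]
  ring

/-- **Reaction term estimate (flat-ambient case).** For `0 < δ ≤ 1/2`, `k̃ ≥ 1`,
`m ≥ 4k̃`, `1/m < c ≤ 1/(m−k̃)` and `f = c|H|² + d − |A|² > 0`:
`Σ_{α,β≥1} (tr(A_α A_β))² + Σ_{α,β≥1} ‖[A_α, A_β]‖² + Σ_{β≥1} ‖[h̊, A_β]‖²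
≤ (1−δ)(|A⁻|²/f)(cR₂ − R₁)
+ (1−δ)(|A⁻|²/f)((1/(mc−1))d(|A⁻|² + 2f) + (mc/(mc−1))d|h̊|²)`. -/
theorem reaction_term_estimate_flat
    (m k : ℕ) (hm : 2 ≤ m) (hk : 0 < k)
    (A : Fin k → Matrix (Fin m) (Fin m) ℝ)
    (hsymm : ∀ α, (A α).IsSymm)
    (H : ℝ) (hH : 0 < H)
    (htr₀ : (A ⟨0, hk⟩).trace = H)
    (htr : ∀ α, α ≠ ⟨0, hk⟩ → (A α).trace = 0)
    (δ : ℝ) (hδ₀ : 0 < δ) (hδ : δ ≤ 1 / 2)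
    (ktilde : ℕ) (hkt : 1 ≤ ktilde) (hmkt : 4 * ktilde ≤ m)
    (c : ℝ) (hc₁ : 1 / (m : ℝ) < c) (hc₂ : c ≤ 1 / ((m : ℝ) - (ktilde : ℝ)))
    (d f : ℝ) (hf : f = c * H ^ 2 + d - ∑ α, frobSq (A α)) (hfpos : 0 < f) :
    (∑ α ∈ Finset.univ.erase ⟨0, hk⟩, ∑ β ∈ Finset.univ.erase ⟨0, hk⟩,
        (Matrix.trace (A α * A β)) ^ 2)
      + (∑ α ∈ Finset.univ.erase ⟨0, hk⟩, ∑ β ∈ Finset.univ.erase ⟨0, hk⟩,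
          frobSq (A α * A β - A β * A α))
      + (∑ β ∈ Finset.univ.erase ⟨0, hk⟩,
          frobSq (tracelessh hk A H * A β - A β * tracelessh hk A H))
      ≤ (1 - δ) * (AminusSq hk A / f)
            * (c * (H ^ 2 * frobSq (A ⟨0, hk⟩)) - reactionR1 A)
        + (1 - δ) * (AminusSq hk A / f)
            * ((1 / ((m : ℝ) * c - 1)) * d * (AminusSq hk A + 2 * f)
              + ((m : ℝ) * c / ((m : ℝ) * c - 1)) * d * frobSq (tracelessh hk A H)) := by
  have hm0 : (0 : ℝ) < m := by exact_mod_cast (by omega : 0 < m)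
  have hkt' : (4 : ℝ) * ktilde ≤ m := by exact_mod_cast hmkt
  have he : 0 < (m : ℝ) * c - 1 := by
    rw [div_lt_iff₀ hm0] at hc₁; linarith
  have he3 : (m : ℝ) * c - 1 ≤ 1 / 3 := by
    have hpos : (0 : ℝ) < m - ktilde := by linarith
    have hc0 : 0 < c := by nlinarith
    rw [le_div_iff₀ hpos] at hc₂
    nlinarith
  set z : Fin k := ⟨0, hk⟩ with hz
  set h := tracelessh hk A H with hh
  have hA0 : A z = h + (H / (m : ℝ)) • (1 : Matrix (Fin m) (Fin m) ℝ) := by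
    rw [hh, tracelessh]; abel
  have hhsymm : h.IsSymm := by
    rw [hh, tracelessh]
    exact (hsymm _).sub ((Matrix.isSymm_one).smul _)
  have htrh : h.trace = 0 := by
    rw [hh, tracelessh, Matrix.trace_sub, Matrix.trace_smul, Matrix.trace_one, htr₀]
    simp; field_simp; simp
  have htrsq : ∀ M : Matrix (Fin m) (Fin m) ℝ, M.IsSymm → (M * M).trace = frobSq M := by
    intro M hM
    rw [frobSq_eq_trace, hM.eq]
  have hfrob0 : frobSq (A z) = frobSq h + H ^ 2 / m := by
    rw [← htrsq _ (hsymm z), ← htrsq _ hhsymm, hA0]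
    simp only [Matrix.add_mul, Matrix.mul_add, Matrix.trace_add, Matrix.smul_mul, Matrix.mul_smul,
      Matrix.one_mul, Matrix.mul_one, Matrix.trace_smul, htrh, Matrix.trace_one]
    simp
    field_simp
  have htr0 : ∀ β ∈ Finset.univ.erase z, (A z * A β).trace = (h * A β).trace := by
    intro β hβ
    rw [hA0, Matrix.add_mul, Matrix.smul_mul, Matrix.one_mul, Matrix.trace_add,
      Matrix.trace_smul, htr β (Finset.ne_of_mem_erase hβ)]
    simp
  have hcomm0 : ∀ β, A z * A β - A β * A z = h * A β - A β * h := by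
    intro β
    rw [hA0]
    simp only [Matrix.add_mul, Matrix.mul_add, Matrix.smul_mul, Matrix.mul_smul,
      Matrix.one_mul, Matrix.mul_one]
    abel
  have hcommsymm : ∀ X Y : Matrix (Fin m) (Fin m) ℝ, frobSq (X * Y - Y * X)
      = frobSq (Y * X - X * Y) := by
    intro X Y
    unfold frobSq
    refine Finset.sum_congr rfl fun i _ => Finset.sum_congr rfl fun j _ => ?_
    simp only [Matrix.sub_apply]; ring
  set St := ∑ α ∈ Finset.univ.erase z, ∑ β ∈ Finset.univ.erase z,
        (Matrix.trace (A α * A β)) ^ 2 with hSt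
  set Sc := ∑ α ∈ Finset.univ.erase z, ∑ β ∈ Finset.univ.erase z,
          frobSq (A α * A β - A β * A α) with hSc
  set Q := ∑ β ∈ Finset.univ.erase z, frobSq (h * A β - A β * h) with hQ
  set P := ∑ β ∈ Finset.univ.erase z, (Matrix.trace (h * A β)) ^ 2 with hP
  set b := AminusSq hk A with hbdef
  have hb : b = ∑ α ∈ Finset.univ.erase z, frobSq (A α) := rfl
  have hR : reactionR1 A
      = (frobSq h + H ^ 2 / m) ^ 2 + 2 * P + 2 * Q + (St + Sc) := by
    rw [reactionR1, sum_sum_split z (fun α β => (Matrix.trace (A α * A β)) ^ 2)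
        fun α β => by rw [Matrix.trace_mul_comm],
      sum_sum_split z (fun α β => frobSq (A α * A β - A β * A α))
        fun α β => hcommsymm _ _]
    have e1 : frobSq (A z * A z - A z * A z) = 0 := by simp [frobSq]
    have e2 : ∑ β ∈ Finset.univ.erase z, (Matrix.trace (A z * A β)) ^ 2 = P :=
      Finset.sum_congr rfl fun β hβ => by rw [htr0 β hβ]
    have e3 : ∑ β ∈ Finset.univ.erase z, frobSq (A z * A β - A β * A z) = Q :=
      Finset.sum_congr rfl fun β _ => by rw [hcomm0 β]
    simp only [e1, e2, e3, htrsq _ (hsymm z), hfrob0]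
    ring
  have hS : St + Sc ≤ 2 * b ^ 2 := by
    rw [hSt, hSc, ← Finset.sum_add_distrib, sq, hb, Finset.sum_mul_sum, Finset.mul_sum]
    refine Finset.sum_le_sum fun α _ => ?_
    rw [← Finset.sum_add_distrib, Finset.mul_sum]
    refine Finset.sum_le_sum fun β _ => ?_
    rw [← mul_assoc]
    exact trace_sq_add_comm_le _ _ (hsymm α)
  have hPQ : P + Q ≤ 2 * frobSq h * b := by
    rw [hP, hQ, ← Finset.sum_add_distrib, hb, Finset.mul_sum]
    exact Finset.sum_le_sum fun β _ => trace_sq_add_comm_le _ _ hhsymm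
  have hf' : f = c * H ^ 2 + d - (frobSq h + H ^ 2 / m + b) := by
    rw [hf, ← Finset.add_sum_erase _ _ (Finset.mem_univ z), hfrob0, hb]
  rw [hR, hfrob0]
  exact reaction_scalar_ineq hm0 he he3 hδ hf' hfpos (frobSq_nonneg h)
    (hb ▸ Finset.sum_nonneg fun α _ => frobSq_nonneg _) hS
    (Finset.sum_nonneg fun _ _ => sq_nonneg _) hPQ
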